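/- For all n ≥ k ≥ 0, the higher derangement numbers satisfy d_n^k ≥ d_{n-1}^k whenever n ≥ k+2, i.e., each column of the normalized Euler difference table is eventually monotone increasing. -/

import Mathlib

/-- Higher derangement numbers via the closed form
`dSum n k = (1/k!) ∑_{l=0}^k C(k,l) d_{n-l}`. -/
def dSum (n k : ℕ) : ℚ :=
  (1 / (Nat.factorial k : ℚ)) *
    ∑ l ∈ Finset.range (k + 1), (Nat.choose k l : ℚ) * (numDerangements (n - l) : ℚ)

theorem monotoneOn_numDerangements : MonotoneOn numDerangements (Set.Ici 1) := by
  refine monotoneOn_nat_Ici_of_le_succ fun n hn => ?_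
  obtain ⟨m, rfl⟩ := Nat.exists_eq_add_of_le' hn
  calc numDerangements (m + 1)
      ≤ numDerangements m + numDerangements (m + 1) := Nat.le_add_left _ _
    _ ≤ (m + 1) * (numDerangements m + numDerangements (m + 1)) :=
        Nat.le_mul_of_pos_left _ m.succ_pos
    _ = numDerangements (m + 2) := (numDerangements_add_two m).symm

-- From `n = k + 1` on, every `d_{n-l}` in the sum has positive index, which avoids the only
-- descent `d_0 > d_1` of the derangement numbers.
theorem monotoneOn_dSum (k : ℕ) : MonotoneOn (fun n => dSum n k) (Set.Ici (k + 1)) := by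
  intro m hm n hn hmn
  rw [Set.mem_Ici] at hm hn
  have hterm (l : ℕ) (hl : l < k + 1) : numDerangements (m - l) ≤ numDerangements (n - l) :=
    monotoneOn_numDerangements (Nat.sub_pos_of_lt (hl.trans_le hm))
      (Nat.sub_pos_of_lt (hl.trans_le hn)) (Nat.sub_le_sub_right hmn l)
  simp only [dSum]
  gcongr with l hl
  exact hterm l (Finset.mem_range.mp hl)

theorem dSum_monotone (n k : ℕ) (h : k + 2 ≤ n) : dSum (n - 1) k ≤ dSum n k :=
  monotoneOn_dSum k (Nat.le_sub_one_of_lt h) (Nat.le_of_succ_le h) n.pred_le
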